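/- For an odd-length chain with quadratic spectrum and maximum coupling rescaled to 1, the perfect state transfer time satisfies t₀ ≥ (π/8)·√((N+1)(N-1)(N²-5)), which is asymptotically πN²/8. -/

import Mathlib

/-!
A mirror-symmetric Jacobi matrix `A` commutes with the reversal matrix `S`, and its spectrum is
simple, so `S` is diagonal in the eigenbasis of `A`, with entries `ε k = ±1`. For the monic
polynomial `q` of degree `n` vanishing at all eigenvalues except `ν k`, the corner entry of `q(A)`
is on the one hand the product of the off-diagonal entries, hence positive, and on the other hand a
nonnegative multiple of `ε k * q (ν k)`. So `ε k` has the sign of `∏ j ≠ k, (ν k - ν j)`, i.e. the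
parity of the eigenvectors alternates along the spectrum and `tr (S p(A)) = ∑ k, (-1) ^ k p (ν k)`.
For a chain of `2m + 1` sites `tr (S H²)` sees only the two couplings at the central site, and for
the quadratic spectrum the alternating sum of squares is `m (m + 1) (m² + m - 1)`.
-/

open Matrix Polynomial Unitary

section Hessenberg

variable {R : Type*} [Semiring R] {n : ℕ} {A : Matrix (Fin n) (Fin n) R}

theorem pow_apply_eq_zero_of_add_lt (hA : ∀ i j : Fin n, (i : ℕ) + 1 < j → A i j = 0)
    (k : ℕ) (i j : Fin n) (hij : (i : ℕ) + k < j) : (A ^ k) i j = 0 := by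
  induction k generalizing j with
  | zero => exact one_apply_ne (Fin.ne_of_lt hij)
  | succ k ih =>
    rw [pow_succ, mul_apply]
    refine Finset.sum_eq_zero fun l _ ↦ ?_
    by_cases hl : (i : ℕ) + k < l
    · rw [ih l hl, zero_mul]
    · rw [hA l j (by omega), mul_zero]

theorem pow_apply_pos_of_add_eq [PartialOrder R] [IsStrictOrderedRing R]
    (hA : ∀ i j : Fin n, (i : ℕ) + 1 < j → A i j = 0)
    (hpos : ∀ i j : Fin n, (i : ℕ) + 1 = j → 0 < A i j)
    (k : ℕ) (i j : Fin n) (hij : (i : ℕ) + k = j) : 0 < (A ^ k) i j := by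
  induction k generalizing j with
  | zero => simp [Fin.ext (a := i) (b := j) hij]
  | succ k ih =>
    let p : Fin n := ⟨i + k, by omega⟩
    have hsum : (A ^ (k + 1)) i j = (A ^ k) i p * A p j := by
      rw [pow_succ, mul_apply]
      refine Finset.sum_eq_single_of_mem p (Finset.mem_univ p) fun l _ hl ↦ ?_
      rcases lt_or_gt_of_ne hl with hlt | hgt
      · rw [hA l j (by have : (l : ℕ) < i + k := hlt; omega), mul_zero]
      · rw [pow_apply_eq_zero_of_add_lt hA k i l hgt, zero_mul]
    rw [hsum]
    exact mul_pos (ih p rfl) (hpos p j (by simpa [p, add_assoc] using hij))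

end Hessenberg

theorem aeval_apply_of_add_natDegree_eq {R : Type*} [CommSemiring R] {n : ℕ}
    {A : Matrix (Fin n) (Fin n) R} (hA : ∀ i j : Fin n, (i : ℕ) + 1 < j → A i j = 0)
    (q : R[X]) (i j : Fin n) (hij : (i : ℕ) + q.natDegree = j) :
    aeval A q i j = q.leadingCoeff * (A ^ q.natDegree) i j := by
  rw [aeval_eq_sum_range, Matrix.sum_apply]
  refine Finset.sum_eq_single_of_mem _ (Finset.self_mem_range_succ _) fun k hk hne ↦ ?_
  have hlt : k < q.natDegree := by grind
  rw [Matrix.smul_apply, pow_apply_eq_zero_of_add_lt hA k i j (by omega), smul_zero]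

theorem neg_one_pow_mul_prod_sub_pos_of_strictAnti {R : Type*} [CommRing R] [LinearOrder R]
    [IsStrictOrderedRing R] {n : ℕ} {ν : Fin n → R} (hν : StrictAnti ν) (k : Fin n) :
    0 < (-1) ^ (k : ℕ) * ∏ j ∈ {k}ᶜ, (ν k - ν j) := by
  have hflip : (-1) ^ (k : ℕ) * ∏ j ∈ Finset.Iio k, (ν k - ν j) =
      ∏ j ∈ Finset.Iio k, (ν j - ν k) := by
    simp_rw [← neg_sub (ν _) (ν k), Finset.prod_neg, Fin.card_Iio, ← mul_assoc, ← mul_pow]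
    simp
  rw [← Finset.Ioi_disjUnion_Iio, Finset.prod_disjUnion, mul_left_comm, hflip]
  exact mul_pos
    (Finset.prod_pos fun j hj ↦ sub_pos.2 (hν (Finset.mem_Ioi.1 hj)))
    (Finset.prod_pos fun j hj ↦ sub_pos.2 (hν (Finset.mem_Iio.1 hj)))

section Diagonalization

variable {ι : Type*} [Fintype ι] [DecidableEq ι]

theorem eq_diagonal_of_commute_diagonal {R : Type*} [CommRing R] [NoZeroDivisors R]
    {ν : ι → R} (hν : Function.Injective ν) {M : Matrix ι ι R} (hM : Commute M (diagonal ν)) :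
    M = diagonal M.diag := by
  ext i j
  rcases eq_or_ne i j with rfl | hij
  · simp
  have hentry : (ν j - ν i) * M i j = 0 := by
    have := congr_fun₂ hM.eq i j
    rw [mul_diagonal, diagonal_mul] at this
    linear_combination this
  rw [diagonal_apply_ne _ hij]
  exact (mul_eq_zero.1 hentry).resolve_left (sub_ne_zero.2 (hν.ne hij.symm))

theorem exists_eq_conjStarAlgAut_diagonal {A : Matrix ι ι ℝ} (hA : A.IsHermitian)
    {ν : ι → ℝ} (hν : Function.Injective ν) (hspec : ∀ i, ν i ∈ spectrum ℝ A) :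
    ∃ U : unitaryGroup ι ℝ, A = conjStarAlgAut ℝ _ U (diagonal ν) := by
  have hmem : ∀ i, ∃ j, hA.eigenvalues j = ν i := fun i ↦ by
    rw [← Set.mem_range, ← hA.spectrum_real_eq_range_eigenvalues]
    exact hspec i
  choose σ hσ using hmem
  have hσinj : Function.Injective σ := fun i j h ↦ hν (by rw [← hσ, ← hσ, h])
  let e : ι ≃ ι := Equiv.ofBijective σ (Finite.injective_iff_bijective.1 hσinj)
  have hνe : hA.eigenvalues ∘ e = ν := funext hσ
  let V : Matrix ι ι ℝ := hA.eigenvectorUnitary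
  have hV : V.submatrix id e ∈ unitaryGroup ι ℝ := by
    rw [mem_unitaryGroup_iff, star_eq_conjTranspose, conjTranspose_submatrix,
      submatrix_mul_equiv, submatrix_id_id]
    exact coe_mul_star_self hA.eigenvectorUnitary
  refine ⟨⟨V.submatrix id e, hV⟩, ?_⟩
  conv_lhs => rw [hA.spectral_theorem]
  rw [conjStarAlgAut_apply, conjStarAlgAut_apply, ← hνe, ← submatrix_diagonal_equiv]
  simp only [star_eq_conjTranspose, conjTranspose_submatrix, submatrix_mul_equiv, submatrix_id_id]
  rfl

theorem conjStarAlgAut_diagonal_apply_self (U : unitaryGroup ι ℝ) (d : ι → ℝ) (i : ι) :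
    conjStarAlgAut ℝ (Matrix ι ι ℝ) U (diagonal d) i i = ∑ k, d k * U i k ^ 2 := by
  rw [conjStarAlgAut_apply, mul_apply]
  refine Finset.sum_congr rfl fun k _ ↦ ?_
  rw [mul_diagonal, star_apply, star_trivial]
  ring

theorem trace_conjStarAlgAut {R : Type*} [CommRing R] [StarRing R] (U : unitaryGroup ι R)
    (M : Matrix ι ι R) : (conjStarAlgAut R (Matrix ι ι R) U M).trace = M.trace := by
  rw [conjStarAlgAut_apply, trace_mul_comm, ← mul_assoc, coe_star_mul_self, one_mul]

theorem aeval_diagonal {R : Type*} [CommSemiring R] (d : ι → R) (q : R[X]) :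
    aeval (diagonal d) q = diagonal fun i ↦ q.eval (d i) := by
  have hmap : aeval (diagonal d) q = diagonal (aeval d q) :=
    aeval_algHom_apply (diagonalAlgHom R) d q
  simp only [hmap, aeval_pi_apply, coe_aeval_eq_eval]

theorem aeval_conjStarAlgAut_diagonal {R : Type*} [CommRing R] [StarRing R]
    (U : unitaryGroup ι R) (d : ι → R) (q : R[X]) :
    aeval (conjStarAlgAut R (Matrix ι ι R) U (diagonal d)) q =
      conjStarAlgAut R (Matrix ι ι R) U (diagonal fun i ↦ q.eval (d i)) := by
  rw [← aeval_diagonal]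
  exact aeval_algHom_apply (conjStarAlgAut R (Matrix ι ι R) U).toAlgEquiv.toAlgHom _ q

theorem exists_eq_conjStarAlgAut_diagonal_of_commute {R : Type*} [CommRing R] [NoZeroDivisors R]
    [StarRing R] {U : unitaryGroup ι R} {ν : ι → R} (hν : Function.Injective ν)
    {S : Matrix ι ι R} (hS : Commute S (conjStarAlgAut R _ U (diagonal ν))) :
    ∃ ε : ι → R, S = conjStarAlgAut R _ U (diagonal ε) := by
  let φ := conjStarAlgAut R (Matrix ι ι R) U
  have hcomm : Commute (φ.symm S) (diagonal ν) := by
    rw [← φ.symm_apply_apply (diagonal ν)]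
    exact hS.map φ.symm
  refine ⟨(φ.symm S).diag, ?_⟩
  rw [← eq_diagonal_of_commute_diagonal hν hcomm]
  exact (φ.apply_symm_apply S).symm

end Diagonalization

/-- A matrix that is invariant under simultaneous reversal of its rows and columns; for the
Hamiltonian of a chain this is mirror symmetry. -/
def IsCentrosymmetric {n : ℕ} {α : Type*} (A : Matrix (Fin n) (Fin n) α) : Prop :=
  ∀ i j, A i.rev j.rev = A i j

section Reversal

variable {n : ℕ} {R : Type*} [Semiring R] {A : Matrix (Fin n) (Fin n) R}

variable (n R) in
/-- The mirror reflection `S` of a chain of `n` sites, exchanging site `i` with site `i.rev`. -/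
abbrev reversalMatrix : Matrix (Fin n) (Fin n) R := Fin.revPerm.permMatrix R

theorem reversalMatrix_mul_apply (i j : Fin n) : (reversalMatrix n R * A) i j = A i.rev j := by
  rw [PEquiv.toMatrix_toPEquiv_mul, submatrix_apply, Fin.revPerm_apply, id]

theorem mul_reversalMatrix_apply (i j : Fin n) : (A * reversalMatrix n R) i j = A i j.rev := by
  rw [PEquiv.mul_toMatrix_toPEquiv, submatrix_apply, Fin.revPerm_symm, Fin.revPerm_apply, id]

variable (n R) in
theorem reversalMatrix_mul_self : reversalMatrix n R * reversalMatrix n R = 1 := by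
  rw [← permMatrix_mul, ← permMatrix_one]
  congr 1
  ext i
  simp

theorem IsCentrosymmetric.commute_reversalMatrix (hA : IsCentrosymmetric A) :
    Commute (reversalMatrix n R) A := by
  ext i j
  rw [reversalMatrix_mul_apply, mul_reversalMatrix_apply, ← hA, Fin.rev_rev]

end Reversal

/-- A Jacobi matrix: real symmetric and tridiagonal, with positive off-diagonal entries and an
arbitrary diagonal. By symmetry only the entries above the diagonal are constrained. -/
structure IsJacobi {n : ℕ} (A : Matrix (Fin n) (Fin n) ℝ) : Prop where
  isSymm : A.IsSymm
  apply_eq_zero : ∀ i j : Fin n, (i : ℕ) + 1 < j → A i j = 0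
  apply_pos : ∀ i j : Fin n, (i : ℕ) + 1 = j → 0 < A i j

section Parity

variable {n : ℕ} {A : Matrix (Fin (n + 1)) (Fin (n + 1)) ℝ} {ν : Fin (n + 1) → ℝ}

theorem IsJacobi.aeval_zero_last_pos (hA : IsJacobi A) {q : ℝ[X]} (hq : q.Monic)
    (hdeg : q.natDegree = n) : 0 < aeval A q 0 (Fin.last n) := by
  have hcorner : ((0 : Fin (n + 1)) : ℕ) + q.natDegree = Fin.last n := by simp [hdeg]
  rw [aeval_apply_of_add_natDegree_eq hA.apply_eq_zero q _ _ hcorner, hq.leadingCoeff, one_mul]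
  exact pow_apply_pos_of_add_eq hA.apply_eq_zero hA.apply_pos _ _ _ hcorner

theorem IsJacobi.parity_mul_prod_sub_pos {U : unitaryGroup (Fin (n + 1)) ℝ}
    {ε : Fin (n + 1) → ℝ} (hA : IsJacobi A) (hAU : A = conjStarAlgAut ℝ _ U (diagonal ν))
    (hSU : reversalMatrix (n + 1) ℝ = conjStarAlgAut ℝ _ U (diagonal ε)) (k : Fin (n + 1)) :
    0 < ε k * ∏ j ∈ {k}ᶜ, (ν k - ν j) := by
  set q : ℝ[X] := Lagrange.nodal {k}ᶜ ν with hq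
  have hdeg : q.natDegree = n := by
    rw [hq, Lagrange.natDegree_nodal, Finset.card_compl, Fintype.card_fin, Finset.card_singleton,
      Nat.add_sub_cancel]
  have hcorner : aeval A q 0 (Fin.last n) =
      U (Fin.last n) k ^ 2 * (ε k * ∏ j ∈ {k}ᶜ, (ν k - ν j)) :=
    calc aeval A q 0 (Fin.last n)
        = (reversalMatrix (n + 1) ℝ * aeval A q) (Fin.last n) (Fin.last n) := by
          rw [reversalMatrix_mul_apply, Fin.rev_last]
      _ = ∑ j, ε j * q.eval (ν j) * U (Fin.last n) j ^ 2 := by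
          rw [hSU, hAU, aeval_conjStarAlgAut_diagonal, ← map_mul, diagonal_mul_diagonal,
            conjStarAlgAut_diagonal_apply_self]
      _ = ε k * q.eval (ν k) * U (Fin.last n) k ^ 2 :=
          Finset.sum_eq_single_of_mem k (Finset.mem_univ k) fun j _ hj ↦ by
            rw [hq, Lagrange.eval_nodal_at_node (by simpa using hj), mul_zero, zero_mul]
      _ = U (Fin.last n) k ^ 2 * (ε k * ∏ j ∈ {k}ᶜ, (ν k - ν j)) := by
          rw [hq, Lagrange.eval_nodal, mul_comm]
  have hpos := hA.aeval_zero_last_pos (hq ▸ Lagrange.nodal_monic) hdeg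
  rw [hcorner] at hpos
  exact pos_of_mul_pos_right hpos (sq_nonneg _)

theorem IsJacobi.exists_diagonalization_alternating (hA : IsJacobi A)
    (hmirror : IsCentrosymmetric A) (hν : StrictAnti ν) (hspec : ∀ k, ν k ∈ spectrum ℝ A) :
    ∃ U : unitaryGroup (Fin (n + 1)) ℝ, A = conjStarAlgAut ℝ _ U (diagonal ν) ∧
      reversalMatrix (n + 1) ℝ = conjStarAlgAut ℝ _ U (diagonal fun k ↦ (-1) ^ (k : ℕ)) := by
  have hherm : A.IsHermitian := by
    rw [IsHermitian, conjTranspose_eq_transpose_of_trivial, hA.isSymm.eq]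
  obtain ⟨U, hAU⟩ := exists_eq_conjStarAlgAut_diagonal hherm hν.injective hspec
  obtain ⟨ε, hSU⟩ := exists_eq_conjStarAlgAut_diagonal_of_commute hν.injective
    (hAU ▸ hmirror.commute_reversalMatrix)
  have hεsq (k) : ε k * ε k = 1 := by
    have hdiag : diagonal (fun k ↦ ε k * ε k) = (1 : Matrix _ _ ℝ) := by
      apply EquivLike.injective (conjStarAlgAut ℝ _ U)
      rw [← diagonal_mul_diagonal, map_mul, ← hSU, reversalMatrix_mul_self, map_one]
    simpa using congr_fun₂ hdiag k k
  have hε (k : Fin (n + 1)) : ε k = (-1) ^ (k : ℕ) := by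
    have hsign : 0 < ε k * (-1) ^ (k : ℕ) := by
      have hparity := hA.parity_mul_prod_sub_pos hAU hSU k
      have hprod := neg_one_pow_mul_prod_sub_pos_of_strictAnti hν k
      refine pos_of_mul_pos_left (b := (∏ j ∈ {k}ᶜ, (ν k - ν j)) ^ 2) ?_ (sq_nonneg _)
      convert mul_pos hparity hprod using 1
      ring
    rcases mul_self_eq_one_iff.1 (hεsq k) with h | h <;>
      rcases neg_one_pow_eq_or ℝ (k : ℕ) with h' | h' <;> rw [h, h'] at hsign ⊢ <;> linarith
  exact ⟨U, hAU, by rw [hSU, funext hε]⟩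

theorem IsJacobi.trace_reversalMatrix_mul_aeval (hA : IsJacobi A) (hmirror : IsCentrosymmetric A)
    (hν : StrictAnti ν) (hspec : ∀ k, ν k ∈ spectrum ℝ A) (q : ℝ[X]) :
    (reversalMatrix (n + 1) ℝ * aeval A q).trace =
      ∑ k : Fin (n + 1), (-1) ^ (k : ℕ) * q.eval (ν k) := by
  obtain ⟨U, hAU, hSU⟩ := hA.exists_diagonalization_alternating hmirror hν hspec
  rw [hSU, hAU, aeval_conjStarAlgAut_diagonal, ← map_mul, diagonal_mul_diagonal,
    trace_conjStarAlgAut, trace_diagonal]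

end Parity

section Chain

variable {N : ℕ} {J : ℕ → ℝ}

variable (N J) in
/-- The single-excitation Hamiltonian of the field-free XX chain with `N` sites. Sites are indexed
from `0` and couplings from `1`, so that `J n` couples the sites `n - 1` and `n`. -/
def chainHamiltonian : Matrix (Fin N) (Fin N) ℝ :=
  of fun i j ↦
    if (i : ℕ) + 1 = (j : ℕ) then J ((i : ℕ) + 1)
    else if (j : ℕ) + 1 = (i : ℕ) then J ((j : ℕ) + 1) else 0

theorem chainHamiltonian_isSymm : (chainHamiltonian N J).IsSymm := by
  ext i j
  simp only [chainHamiltonian, transpose_apply, of_apply]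
  grind

theorem chainHamiltonian_apply_of_add_one_eq {i j : Fin N} (hij : (i : ℕ) + 1 = j) :
    chainHamiltonian N J i j = J j := by
  simp [chainHamiltonian, hij]

theorem chainHamiltonian_apply_of_eq_add_one {i j : Fin N} (hij : (i : ℕ) = j + 1) :
    chainHamiltonian N J i j = J i := by
  rw [← chainHamiltonian_isSymm.apply, chainHamiltonian_apply_of_add_one_eq hij.symm]

theorem chainHamiltonian_apply_eq_zero {i j : Fin N} (hij : (i : ℕ) + 1 ≠ j)
    (hji : (j : ℕ) + 1 ≠ i) : chainHamiltonian N J i j = 0 := by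
  simp [chainHamiltonian, hij, hji]

theorem isJacobi_chainHamiltonian (hJ : ∀ n, 1 ≤ n → n ≤ N - 1 → 0 < J n) :
    IsJacobi (chainHamiltonian N J) where
  isSymm := chainHamiltonian_isSymm
  apply_eq_zero i j hij := chainHamiltonian_apply_eq_zero (by omega) (by omega)
  apply_pos i j hij := by
    rw [chainHamiltonian_apply_of_add_one_eq hij]
    exact hJ j (by omega) (by omega)

theorem isCentrosymmetric_chainHamiltonian (hJ : ∀ n, 1 ≤ n → n ≤ N - 1 → J n = J (N - n)) :
    IsCentrosymmetric (chainHamiltonian N J) := by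
  intro i j
  by_cases hij : (i : ℕ) + 1 = j
  · rw [chainHamiltonian_apply_of_add_one_eq hij, hJ j (by omega) (by omega),
      chainHamiltonian_apply_of_eq_add_one (by grind)]
    grind
  by_cases hji : (i : ℕ) = j + 1
  · rw [chainHamiltonian_apply_of_eq_add_one hji, hJ i (by omega) (by omega),
      chainHamiltonian_apply_of_add_one_eq (by grind)]
    grind
  rw [chainHamiltonian_apply_eq_zero hij (Ne.symm hji),
    chainHamiltonian_apply_eq_zero (by grind) (by grind)]

theorem trace_reversalMatrix_mul_chainHamiltonian_sq {m : ℕ} (hm : 1 ≤ m) :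
    (reversalMatrix (2 * m + 1) ℝ * chainHamiltonian (2 * m + 1) J ^ 2).trace =
      (J m + J (m + 1)) ^ 2 := by
  set H := chainHamiltonian (2 * m + 1) J with hH
  let c : Fin (2 * m + 1) := ⟨m, by omega⟩
  let l : Fin (2 * m + 1) := ⟨m - 1, by omega⟩
  let r : Fin (2 * m + 1) := ⟨m + 1, by omega⟩
  have hlr : l.rev = r := by grind
  have hrl : r.rev = l := by grind
  have hcc : c.rev = c := by grind
  have hlc : H l c = J m := chainHamiltonian_apply_of_add_one_eq (by grind)
  have hcr : H c r = J (m + 1) := chainHamiltonian_apply_of_add_one_eq (by grind)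
  have hcl : H c l = J m := by rw [hH, chainHamiltonian_isSymm.apply, ← hH, hlc]
  have hrc : H r c = J (m + 1) := by rw [hH, chainHamiltonian_isSymm.apply, ← hH, hcr]
  calc (reversalMatrix (2 * m + 1) ℝ * H ^ 2).trace
      = ∑ p : Fin (2 * m + 1) × Fin (2 * m + 1), H p.1.rev p.2 * H p.2 p.1 := by
        simp only [trace, diag_apply, reversalMatrix_mul_apply, Fintype.sum_prod_type]
        simp only [sq, mul_apply]
    _ = ∑ p ∈ {(l, c), (r, c), (c, l), (c, r)}, H p.1.rev p.2 * H p.2 p.1 := by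
        refine (Finset.sum_subset (Finset.subset_univ _) fun ⟨i, j⟩ _ hij ↦ ?_).symm
        simp only [Finset.mem_insert, Finset.mem_singleton, Prod.mk.injEq, Fin.ext_iff, l, c, r]
          at hij ⊢
        rw [mul_eq_zero, or_iff_not_imp_right]
        intro h
        have hadj : (j : ℕ) + 1 = i ∨ (i : ℕ) + 1 = j := by
          contrapose! h
          exact chainHamiltonian_apply_eq_zero h.1 h.2
        apply chainHamiltonian_apply_eq_zero <;> rw [Fin.val_rev] <;> omega
    _ = (J m + J (m + 1)) ^ 2 := by
        rw [Finset.sum_insert (by grind), Finset.sum_insert (by grind),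
          Finset.sum_insert (by grind), Finset.sum_singleton]
        simp only [hlr, hrl, hcc, hlc, hcl, hcr, hrc]
        ring

end Chain

section QuadraticSpectrum

theorem strictMono_mul_abs_self {R : Type*} [Ring R] [LinearOrder R] [IsStrictOrderedRing R] :
    StrictMono fun x : R ↦ x * |x| := by
  refine strictMono_of_odd_strictMonoOn_nonneg (fun x ↦ by simp) fun x hx y hy hxy ↦ ?_
  simpa only [abs_of_nonneg hx.out, abs_of_nonneg hy.out] using mul_self_lt_mul_self hx hxy

/-- The eigenvalues `m², …, 4, 1, 0, -1, -4, …, -m²` in decreasing order, written as `x * |x|` for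
`x = m, …, -m`. -/
def quadraticEigenvalue (m : ℕ) (i : Fin (2 * m + 1)) : ℝ :=
  ((m : ℝ) - (i : ℕ)) * |(m : ℝ) - (i : ℕ)|

theorem quadraticEigenvalue_strictAnti (m : ℕ) : StrictAnti (quadraticEigenvalue m) := by
  intro i j hij
  refine strictMono_mul_abs_self (sub_lt_sub_left ?_ _)
  exact_mod_cast hij

theorem exists_quadraticEigenvalue_eq_sq_or_neg_sq (m : ℕ) (i : Fin (2 * m + 1)) :
    ∃ k ≤ m, quadraticEigenvalue m i = (k : ℝ) ^ 2 ∨ quadraticEigenvalue m i = -(k : ℝ) ^ 2 := by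
  have := i.is_lt
  rcases le_total (i : ℕ) m with him | hmi
  · refine ⟨m - i, by omega, .inl ?_⟩
    rw [quadraticEigenvalue, ← Nat.cast_sub him, Nat.abs_cast, sq]
  · refine ⟨i - m, by omega, .inr ?_⟩
    rw [quadraticEigenvalue, ← neg_sub, ← Nat.cast_sub hmi, abs_neg, Nat.abs_cast, sq, neg_mul]

theorem sum_neg_one_pow_mul_sub_pow_four {R : Type*} [CommRing R] (m : ℕ) :
    ∑ i ∈ Finset.range (2 * m + 1), (-1) ^ i * ((m : R) - i) ^ 4 =
      m * (m + 1) * ((m : R) ^ 2 + m - 1) := by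
  induction m with
  | zero => simp
  | succ m ih =>
    have hshift (i : ℕ) : (-1) ^ (i + 1) * (((m + 1 : ℕ) : R) - (i + 1 : ℕ)) ^ 4 =
        -((-1) ^ i * ((m : R) - i) ^ 4) := by
      push_cast
      ring
    rw [show 2 * (m + 1) + 1 = 2 * m + 1 + 1 + 1 by ring, Finset.sum_range_succ,
      Finset.sum_range_succ', Finset.sum_congr rfl fun i _ ↦ hshift i, Finset.sum_neg_distrib, ih,
      Even.neg_one_pow (n := 2 * m + 1 + 1) ⟨m + 1, by ring⟩]
    push_cast
    ring

theorem sum_neg_one_pow_mul_quadraticEigenvalue_sq (m : ℕ) :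
    ∑ i : Fin (2 * m + 1), (-1) ^ (i : ℕ) * quadraticEigenvalue m i ^ 2 =
      m * (m + 1) * ((m : ℝ) ^ 2 + m - 1) := by
  rw [← sum_neg_one_pow_mul_sub_pow_four, Finset.sum_range]
  refine Finset.sum_congr rfl fun i _ ↦ ?_
  rw [quadraticEigenvalue, mul_pow, sq_abs]
  ring

end QuadraticSpectrum

theorem four_mul_middle_coupling_sq {m : ℕ} (hm : 1 ≤ m) {J : ℕ → ℝ}
    (hpos : ∀ n, 1 ≤ n → n ≤ 2 * m → 0 < J n)
    (hmirror : ∀ n, 1 ≤ n → n ≤ 2 * m → J n = J (2 * m + 1 - n))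
    (hspec : ∀ i, quadraticEigenvalue m i ∈ spectrum ℝ (chainHamiltonian (2 * m + 1) J)) :
    4 * J m ^ 2 = m * (m + 1) * ((m : ℝ) ^ 2 + m - 1) := by
  have hmid : J (m + 1) = J m := by
    rw [hmirror m hm (by omega)]
    congr 1
    omega
  have htrace := (isJacobi_chainHamiltonian hpos).trace_reversalMatrix_mul_aeval
    (isCentrosymmetric_chainHamiltonian hmirror) (quadraticEigenvalue_strictAnti m) hspec (X ^ 2)
  simp only [map_pow, aeval_X, eval_pow, eval_X] at htrace
  calc 4 * J m ^ 2 = (J m + J (m + 1)) ^ 2 := by rw [hmid]; ring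
    _ = ∑ i : Fin (2 * m + 1), (-1) ^ (i : ℕ) * quadraticEigenvalue m i ^ 2 := by
      rw [← trace_reversalMatrix_mul_chainHamiltonian_sq hm]
      exact htrace
    _ = m * (m + 1) * ((m : ℝ) ^ 2 + m - 1) := sum_neg_one_pow_mul_quadraticEigenvalue_sq m

/-- For an odd-length mirror-symmetric field-free XX chain with quadratic spectrum
`0, ±1, ±2², …, ±((N-1)/2)²` and maximum coupling rescaled to `1`, the perfect state
transfer time `t₀ = π·J_max` satisfies `t₀ ≥ (π/8)·√((N+1)(N-1)(N²-5))`. -/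
theorem quadratic_chain_transfer_time_odd (N : ℕ) (hN : Odd N) (hN3 : 3 ≤ N)
    (J : ℕ → ℝ) (hJpos : ∀ n, 1 ≤ n → n ≤ N - 1 → 0 < J n)
    (hmirror : ∀ n, 1 ≤ n → n ≤ N - 1 → J n = J (N - n))
    (H : Matrix (Fin N) (Fin N) ℝ)
    (hH : ∀ i j : Fin N, H i j =
      if (i : ℕ) + 1 = (j : ℕ) then J ((i : ℕ) + 1)
      else if (j : ℕ) + 1 = (i : ℕ) then J ((j : ℕ) + 1) else 0)
    (hspec : spectrum ℝ H =
      {x : ℝ | x = 0 ∨ ∃ k : ℕ, 1 ≤ k ∧ k ≤ (N - 1) / 2 ∧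
        (x = (k : ℝ) ^ 2 ∨ x = -((k : ℝ) ^ 2))})
    (Jmax : ℝ)
    (hub : ∀ n, 1 ≤ n → n ≤ N - 1 → J n ≤ Jmax)
    (hmem : ∃ n, 1 ≤ n ∧ n ≤ N - 1 ∧ J n = Jmax) :
    Real.pi * Jmax ≥ Real.pi / 8 * Real.sqrt ((N + 1) * (N - 1) * ((N : ℝ) ^ 2 - 5)) := by
  obtain ⟨m, rfl⟩ := hN
  have hm : 1 ≤ m := by omega
  obtain rfl : H = chainHamiltonian (2 * m + 1) J := Matrix.ext hH
  have hmem_spec (i) : quadraticEigenvalue m i ∈ spectrum ℝ (chainHamiltonian (2 * m + 1) J) := by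
    obtain ⟨k, hk, hki⟩ := exists_quadraticEigenvalue_eq_sq_or_neg_sq m i
    rw [hspec]
    rcases Nat.eq_zero_or_pos k with rfl | hk0
    · exact .inl (by simpa using hki)
    · exact .inr ⟨k, hk0, by omega, hki⟩
  have hmid := four_mul_middle_coupling_sq hm hJpos hmirror hmem_spec
  have hsqrt : Real.sqrt (((2 * m + 1 : ℕ) + 1) * ((2 * m + 1 : ℕ) - 1) *
      (((2 * m + 1 : ℕ) : ℝ) ^ 2 - 5)) = 8 * J m := by
    rw [Real.sqrt_eq_iff_mul_self_eq_of_pos (by linarith [hJpos m hm (by omega)])]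
    push_cast
    linear_combination 16 * hmid
  calc Real.pi / 8 * Real.sqrt _ = Real.pi * J m := by rw [hsqrt]; ring
    _ ≤ Real.pi * Jmax := by gcongr; exact hub m hm (by omega)
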